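/- (Biorthogonal analogue of Favard's theorem.) Let R be a division ring, let {p_n} be left polynomials and {q_n} be right polynomials over R such that p_n and q_n each have degree exactly n (their n-th coefficients are nonzero and all higher coefficients vanish), and let c : ℕ → R be any sequence. Then there exists a unique family of bimoments I : ℕ → ℕ → R such that for all n, m ∈ ℕ: ⟨p_n, q_m⟩ = 0 when n ≠ m, and ⟨p_n, q_n⟩ = c_n. Explicitly: there is a unique I : ℕ → ℕ → R with ∑_{i=0}^{n} ∑_{j=0}^{m} a_n(i) · I i j · b_m(j) = (if n = m then c_n else 0), where a_n, b_m are the coefficient sequences of p_n, q_m. -/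

import Mathlib

/-- The pairing of a left polynomial `p(x) = ∑ aᵢ xⁱ` with a right polynomial
`q(y) = ∑ yʲ bⱼ` relative to bimoments `I`: `⟨p, q⟩ = ∑_{i,j} aᵢ · I i j · bⱼ`. -/
noncomputable def bimomentPairing {R : Type*} [DivisionRing R] (I : ℕ → ℕ → R)
    (p q : Polynomial R) : R :=
  ∑ i ∈ p.support, ∑ j ∈ q.support, p.coeff i * I i j * q.coeff j

/-!
With the lower triangular coefficient matrices `A n i = (p n).coeff i` and
`B m j = (q m).coeff j`, the Gram matrix of the pairing is `A I Bᵀ`. Both `A` and `B` have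
invertible diagonals, so `I ↦ A I Bᵀ` is a composite of two bijections, each inverted by forward
substitution. Right multiplication by `Bᵀ` becomes a left action over the opposite ring `Rᵐᵒᵖ`.
-/

open Finset MulOpposite

theorem card_Iio_strictMono {ι : Type*} [Preorder ι] [LocallyFiniteOrderBot ι] :
    StrictMono fun n : ι => #(Iio n) :=
  fun _ _ h => card_lt_card (Iio_ssubset_Iio h)

section Triangular

variable {ι K M : Type*} [PartialOrder ι] [LocallyFiniteOrderBot ι] [Ring K] [AddCommGroup M]
  [Module K M]

/-- The action `x ↦ (n ↦ ∑ i ≤ n, a n i • x i)` of a lower triangular matrix `a` on families of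
elements of a module. The entries of `a` above the diagonal are ignored. -/
def lowerTriangularMap (a : ι → ι → K) (x : ι → M) (n : ι) : M :=
  ∑ i ∈ Iic n, a n i • x i

theorem lowerTriangularMap_eq_sum_Iio_add (a : ι → ι → K) (x : ι → M) (n : ι) :
    lowerTriangularMap a x n = ∑ i ∈ Iio n, a n i • x i + a n n • x n :=
  (sum_Iio_add_eq_sum_Iic n).symm

theorem lowerTriangularMap_injective {a : ι → ι → K} (ha : ∀ n, IsUnit (a n n)) :
    Function.Injective (lowerTriangularMap a : (ι → M) → ι → M) := by
  have : WellFoundedLT ι := card_Iio_strictMono.wellFoundedLT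
  intro x y hxy
  funext n
  induction n using WellFoundedLT.induction with
  | ind n ih =>
    have below : ∑ i ∈ Iio n, a n i • x i = ∑ i ∈ Iio n, a n i • y i :=
      sum_congr rfl fun i hi => by rw [ih i (mem_Iio.mp hi)]
    have diagonal := congrFun hxy n
    rw [lowerTriangularMap_eq_sum_Iio_add, lowerTriangularMap_eq_sum_Iio_add, below,
      add_right_inj] at diagonal
    exact (ha n).smul_left_cancel.mp diagonal

/-- Forward substitution: the solution `x` of the system `lowerTriangularMap a x = d`, obtained by
solving the `n`-th equation for `x n`. It is meaningful only if every `a n n` is a unit, since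
`Ring.inverse` is zero on nonunits. -/
noncomputable def forwardSubst (a : ι → ι → K) (d : ι → M) (n : ι) : M :=
  Ring.inverse (a n n) • (d n - ∑ i : Iio n, a n i • forwardSubst a d i)
termination_by #(Iio n)
decreasing_by exact card_Iio_strictMono (mem_Iio.mp i.2)

theorem lowerTriangularMap_forwardSubst {a : ι → ι → K} (ha : ∀ n, IsUnit (a n n)) (d : ι → M) :
    lowerTriangularMap a (forwardSubst a d) = d := by
  funext n
  have diagonal : a n n • forwardSubst a d n =
      d n - ∑ i ∈ Iio n, a n i • forwardSubst a d i := by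
    rw [forwardSubst, smul_smul, Ring.mul_inverse_cancel _ (ha n), one_smul,
      sum_coe_sort (Iio n) fun i => a n i • forwardSubst a d i]
  rw [lowerTriangularMap_eq_sum_Iio_add, diagonal, add_sub_cancel]

theorem lowerTriangularMap_bijective {a : ι → ι → K} (ha : ∀ n, IsUnit (a n n)) :
    Function.Bijective (lowerTriangularMap a : (ι → M) → ι → M) :=
  ⟨lowerTriangularMap_injective ha, fun d => ⟨_, lowerTriangularMap_forwardSubst ha d⟩⟩

end Triangular

section Bimoments

variable {R : Type*} [DivisionRing R]

theorem bimomentPairing_eq_sum_Iic (I : ℕ → ℕ → R) {p q : Polynomial R} {n m : ℕ}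
    (hp : p.natDegree ≤ n) (hq : q.natDegree ≤ m) :
    bimomentPairing I p q = ∑ i ∈ Iic n, ∑ j ∈ Iic m, p.coeff i * I i j * q.coeff j := by
  calc
    bimomentPairing I p q = p.sum fun i a => q.sum fun j b => a * I i j * b := rfl
    _ = ∑ i ∈ range (n + 1), ∑ j ∈ range (m + 1), p.coeff i * I i j * q.coeff j := by
      rw [p.sum_over_range' (by simp [Polynomial.sum_def]) (n + 1) (Nat.lt_succ_of_le hp)]
      exact sum_congr rfl fun i _ => q.sum_over_range' (by simp) (m + 1) (Nat.lt_succ_of_le hq)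
    _ = ∑ i ∈ Iic n, ∑ j ∈ Iic m, p.coeff i * I i j * q.coeff j := by
      rw [Nat.range_succ_eq_Iic, Nat.range_succ_eq_Iic]

/-- The Gram matrix `(n, m) ↦ ⟨p n, q m⟩` of two sequences of polynomials, as a function of the
bimoments. -/
noncomputable def bimomentGram (p q : ℕ → Polynomial R) (I : ℕ → ℕ → R) (n m : ℕ) : R :=
  bimomentPairing I (p n) (q m)

theorem bimomentGram_eq_comp {p q : ℕ → Polynomial R} (hp : ∀ n, (p n).natDegree ≤ n)
    (hq : ∀ n, (q n).natDegree ≤ n) :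
    bimomentGram p q =
      lowerTriangularMap (fun n i => (p n).coeff i) ∘
        Pi.map fun _ => lowerTriangularMap fun m j => op ((q m).coeff j) := by
  funext I n m
  simp only [bimomentGram, bimomentPairing_eq_sum_Iic I (hp n) (hq m), Function.comp_apply,
    lowerTriangularMap, Pi.map_apply, Finset.sum_apply, Pi.smul_apply, smul_eq_mul,
    op_smul_eq_mul, mul_sum, mul_assoc]

theorem bimomentGram_bijective {p q : ℕ → Polynomial R}
    (hp : ∀ n, (p n).natDegree ≤ n) (hp₀ : ∀ n, (p n).coeff n ≠ 0)
    (hq : ∀ n, (q n).natDegree ≤ n) (hq₀ : ∀ n, (q n).coeff n ≠ 0) :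
    Function.Bijective (bimomentGram p q) := by
  rw [bimomentGram_eq_comp hp hq]
  exact (lowerTriangularMap_bijective fun n => (hp₀ n).isUnit).comp
    (Function.Bijective.piMap fun _ => lowerTriangularMap_bijective fun m => (hq₀ m).isUnit.op)

theorem favard_biorthogonal_general (p q : ℕ → Polynomial R)
    (hp : ∀ n, (p n).coeff n ≠ 0 ∧ ∀ i, n < i → (p n).coeff i = 0)
    (hq : ∀ n, (q n).coeff n ≠ 0 ∧ ∀ j, n < j → (q n).coeff j = 0)
    (G : ℕ → ℕ → R) :
    ∃! I : ℕ → ℕ → R, ∀ n m : ℕ, bimomentPairing I (p n) (q m) = G n m := by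
  have gram_bijective := bimomentGram_bijective
    (fun n => Polynomial.natDegree_le_iff_coeff_eq_zero.mpr (hp n).2) (fun n => (hp n).1)
    (fun n => Polynomial.natDegree_le_iff_coeff_eq_zero.mpr (hq n).2) (fun n => (hq n).1)
  simpa only [funext_iff, bimomentGram] using gram_bijective.existsUnique G

end Bimoments

/-- biorthogonal analogue of Favard's theorem: for any sequences `{p n}` of
left polynomials and `{q n}` of right polynomials over a division ring with `p n` and `q n`
of degree exactly `n`, and any sequence `c : ℕ → R`, there is a unique family of bimoments
`I : ℕ → ℕ → R` making `{p n}, {q n}` biorthogonal with `⟨p n, q n⟩ = c n`: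
`⟨p n, q m⟩ = (if n = m then c n else 0)` for all `n m`. -/
theorem favard_biorthogonal {R : Type*} [DivisionRing R]
    (p q : ℕ → Polynomial R)
    (hp : ∀ n, (p n).coeff n ≠ 0 ∧ ∀ i, n < i → (p n).coeff i = 0)
    (hq : ∀ n, (q n).coeff n ≠ 0 ∧ ∀ j, n < j → (q n).coeff j = 0)
    (c : ℕ → R) :
    ∃! I : ℕ → ℕ → R, ∀ n m : ℕ,
      bimomentPairing I (p n) (q m) = if n = m then c n else 0 :=
  favard_biorthogonal_general p q hp hq fun n m => if n = m then c n else 0
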